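/- Let S' be the self-adjoint operator on L²(0,ε) associated with s'[f] = ∫₀^ε|f'|² dt + m|f(0)|² − β|f(ε)|² on H¹(0,ε), where m < 0, β > 0, α := −m. Then as α → +∞, E₁(S') = −α² + O(e^{−εα}), and there exist constants b⁻, b⁺, b > 0 independent of α such that b⁻ j² − b ≤ E_j(S') ≤ b⁺ j² for all j ≥ 2 and all α > 0. -/

import Mathlib

/-- `lam` is an eigenvalue of the operator `S' = −d²/dx²` on `(0, ε)` associated with
the form `s'[f] = ∫₀^ε |f'|² + m |f(0)|² − β |f(ε)|²` on `H¹(0,ε)`, i.e. with Robin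
boundary conditions `f'(0) = m f(0)` (Robin parameter `m` at `0`) and `f'(ε) = β f(ε)`. -/
def IsS'Eigen (ε β m lam : ℝ) : Prop :=
  ∃ f : ℝ → ℝ, ContDiff ℝ 2 f ∧ (∃ x ∈ Set.Icc 0 ε, f x ≠ 0) ∧
    (∀ x, deriv (deriv f) x = - lam * f x) ∧
    deriv f 0 = m * f 0 ∧ deriv f ε = β * f ε

namespace RobinInterval

open Real

variable {ε β α k lam : ℝ}

/-- The secular equation of a negative eigenvalue `-k ^ 2`. -/
lemma secular_of_isS'Eigen_neg (hk : 0 < k) (h : IsS'Eigen ε β (-α) (-k ^ 2)) :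
    (k - α) * (k - β) = exp (-2 * k * ε) * ((k + α) * (k + β)) := by
  obtain ⟨f, hf, ⟨x₀, -, hx₀⟩, hode, h0, hε⟩ := h
  have hd : Differentiable ℝ f := hf.differentiable (by norm_num)
  have hd' : Differentiable ℝ (deriv f) :=
    ((contDiff_succ_iff_deriv (n := 1)).1 hf).2.2.differentiable (by norm_num)
  have conserved (s : ℝ) (hs : s ^ 2 = k ^ 2) (x : ℝ) :
      (deriv f x - s * f x) * exp (s * x) = deriv f 0 - s * f 0 := by
    have hder (y : ℝ) :
        HasDerivAt (fun y => (deriv f y - s * f y) * exp (s * y)) 0 y := by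
      have h1 := ((hd' y).hasDerivAt.sub ((hd y).hasDerivAt.const_mul s)).mul
        (((hasDerivAt_id y).const_mul s).exp)
      refine h1.congr_deriv ?_
      simp only [hode, id_eq, Pi.sub_apply]
      linear_combination (-f y * exp (s * y)) * hs
    have := is_const_of_deriv_eq_zero (fun y => (hder y).differentiableAt)
      (fun y => (hder y).deriv) x 0
    simpa using this
  have hf0 : f 0 ≠ 0 := by
    intro hz
    have h1 := conserved k rfl x₀
    have h2 := conserved (-k) (by ring) x₀
    simp only [h0, hz, mul_zero, sub_zero, mul_eq_zero, (exp_pos _).ne', or_false] at h1 h2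
    exact hx₀ (by nlinarith)
  have h1 := conserved k rfl ε
  have h2 := conserved (-k) (by ring) ε
  rw [h0, hε] at h1 h2
  have e1 : exp (k * ε) * exp (-k * ε) = 1 := by rw [← exp_add]; simp
  have e2 : exp (-2 * k * ε) = exp (-k * ε) * exp (-k * ε) := by rw [← exp_add]; ring_nf
  rw [e2]
  have hfε : f ε * (β + k) * exp (-k * ε) = (k - α) * f 0 := by linear_combination h2
  have hfε' : f ε * (β - k) = -(α + k) * f 0 * exp (-k * ε) := by
    linear_combination exp (-k * ε) * h1 - (f ε * (β - k)) * e1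
  apply mul_left_cancel₀ hf0
  linear_combination (β - k) * hfε - (β + k) * exp (-k * ε) * hfε'

lemma isS'Eigen_neg_of_secular (hε : 0 < ε) (hk : 0 < k)
    (h : (k - α) * (k - β) = exp (-2 * k * ε) * ((k + α) * (k + β))) :
    IsS'Eigen ε β (-α) (-k ^ 2) := by
  have h1 (x : ℝ) : HasDerivAt (fun x => k * cosh (k * x) - α * sinh (k * x))
      (k * (k * sinh (k * x) - α * cosh (k * x))) x := by
    have hx := (hasDerivAt_id x).const_mul k
    refine ((hx.cosh.const_mul k).sub (hx.sinh.const_mul α)).congr_deriv ?_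
    simp only [id_eq]; ring
  have h2 (x : ℝ) : HasDerivAt (fun x => k * (k * sinh (k * x) - α * cosh (k * x)))
      (k * (k * (k * cosh (k * x) - α * sinh (k * x)))) x := by
    have hx := (hasDerivAt_id x).const_mul k
    refine (((hx.sinh.const_mul k).sub (hx.cosh.const_mul α)).const_mul k).congr_deriv ?_
    simp only [id_eq]; ring
  have hd : deriv (fun x => k * cosh (k * x) - α * sinh (k * x)) =
      fun x => k * (k * sinh (k * x) - α * cosh (k * x)) := funext fun x => (h1 x).deriv
  refine ⟨fun x => k * cosh (k * x) - α * sinh (k * x), by fun_prop,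
    ⟨0, ⟨le_rfl, hε.le⟩, by simpa using hk.ne'⟩, fun x => ?_, ?_, ?_⟩
  · rw [hd, (h2 x).deriv]; ring
  · rw [hd]; simp; ring
  · rw [hd]
    have e1 : exp (k * ε) * exp (-(k * ε)) = 1 := by rw [← exp_add]; simp
    have e2 : exp (-2 * k * ε) = exp (-(k * ε)) * exp (-(k * ε)) := by
      rw [← exp_add]; ring_nf
    rw [e2] at h
    simp only [sinh_eq, cosh_eq]
    linear_combination (exp (k * ε) / 2) * h +
      (exp (-(k * ε)) * ((k + α) * (k + β)) / 2) * e1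

lemma secular_of_isS'Eigen_pos (hk : 0 < k) (h : IsS'Eigen ε β (-α) (k ^ 2)) :
    (k ^ 2 - α * β) * sin (k * ε) + (α + β) * k * cos (k * ε) = 0 := by
  obtain ⟨f, hf, ⟨x₀, -, hx₀⟩, hode, h0, hε⟩ := h
  have hd : Differentiable ℝ f := hf.differentiable (by norm_num)
  have hd' : Differentiable ℝ (deriv f) :=
    ((contDiff_succ_iff_deriv (n := 1)).1 hf).2.2.differentiable (by norm_num)
  have hc (x y : ℝ) : k * f x * cos (k * x) - deriv f x * sin (k * x) =
      k * f y * cos (k * y) - deriv f y * sin (k * y) := by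
    have hder (y : ℝ) : HasDerivAt
        (fun y => k * f y * cos (k * y) - deriv f y * sin (k * y)) 0 y := by
      have hy := (hasDerivAt_id y).const_mul k
      refine ((((hd y).hasDerivAt.const_mul k).mul hy.cos).sub
        ((hd' y).hasDerivAt.mul hy.sin)).congr_deriv ?_
      simp only [hode, id_eq]; ring
    exact is_const_of_deriv_eq_zero (fun y => (hder y).differentiableAt)
      (fun y => (hder y).deriv) x y
  have hs (x y : ℝ) : k * f x * sin (k * x) + deriv f x * cos (k * x) =
      k * f y * sin (k * y) + deriv f y * cos (k * y) := by
    have hder (y : ℝ) : HasDerivAt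
        (fun y => k * f y * sin (k * y) + deriv f y * cos (k * y)) 0 y := by
      have hy := (hasDerivAt_id y).const_mul k
      refine ((((hd y).hasDerivAt.const_mul k).mul hy.sin).add
        ((hd' y).hasDerivAt.mul hy.cos)).congr_deriv ?_
      simp only [hode, id_eq]; ring
    exact is_const_of_deriv_eq_zero (fun y => (hder y).differentiableAt)
      (fun y => (hder y).deriv) x y
  have hfε : f ε ≠ 0 := by
    intro hz
    have h1 := hc x₀ ε
    have h2 := hs x₀ ε
    simp only [hε, hz, mul_zero, zero_mul, sub_zero, add_zero] at h1 h2
    have h3 : k * f x₀ = 0 := by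
      linear_combination cos (k * x₀) * h1 + sin (k * x₀) * h2 -
        k * f x₀ * sin_sq_add_cos_sq (k * x₀)
    exact hx₀ ((mul_eq_zero.1 h3).resolve_left hk.ne')
  have h1 := hc ε 0
  have h2 := hs ε 0
  simp only [h0, hε, mul_zero, cos_zero, sin_zero, mul_one, sub_zero, zero_add] at h1 h2
  apply mul_left_cancel₀ hfε
  linear_combination α * h1 + k * h2

lemma isS'Eigen_pos_of_secular (hε : 0 < ε) (hk : 0 < k)
    (h : (k ^ 2 - α * β) * sin (k * ε) + (α + β) * k * cos (k * ε) = 0) :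
    IsS'Eigen ε β (-α) (k ^ 2) := by
  have h1 (x : ℝ) : HasDerivAt (fun x => k * cos (k * x) - α * sin (k * x))
      (-k * (k * sin (k * x) + α * cos (k * x))) x := by
    have hx := (hasDerivAt_id x).const_mul k
    refine ((hx.cos.const_mul k).sub (hx.sin.const_mul α)).congr_deriv ?_
    simp only [id_eq]; ring
  have h2 (x : ℝ) : HasDerivAt (fun x => -k * (k * sin (k * x) + α * cos (k * x)))
      (-k * (k * (k * cos (k * x) - α * sin (k * x)))) x := by
    have hx := (hasDerivAt_id x).const_mul k
    refine (((hx.sin.const_mul k).add (hx.cos.const_mul α)).const_mul (-k)).congr_deriv ?_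
    simp only [id_eq]; ring
  have hd : deriv (fun x => k * cos (k * x) - α * sin (k * x)) =
      fun x => -k * (k * sin (k * x) + α * cos (k * x)) := funext fun x => (h1 x).deriv
  refine ⟨fun x => k * cos (k * x) - α * sin (k * x), by fun_prop,
    ⟨0, ⟨le_rfl, hε.le⟩, by simpa using hk.ne'⟩, fun x => ?_, ?_, ?_⟩
  · rw [hd, (h2 x).deriv]; ring
  · rw [hd]; simp; ring
  · rw [hd]; linear_combination -h

/-- The secular equation for `-k ^ 2` has no root with `k` between `α` and `β`. -/
lemma lt_or_lt_of_secular (hα : 0 < α) (hβ : 0 < β) (hk : 0 < k)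
    (h : (k - α) * (k - β) = exp (-2 * k * ε) * ((k + α) * (k + β))) :
    (k < α ∧ k < β) ∨ (α < k ∧ β < k) := by
  have : 0 < (k - α) * (k - β) := by rw [h]; positivity
  rcases mul_pos_iff.1 this with ⟨h1, h2⟩ | ⟨h1, h2⟩
  · right; constructor <;> linarith
  · left; constructor <;> linarith

lemma large_root_unique (hε : 0 < ε) (hα : 0 < α) (hβ : 0 < β) {l : ℝ}
    (hαk : α < k) (hβk : β < k) (hkl : k < l)
    (hk : (k - α) * (k - β) = exp (-2 * k * ε) * ((k + α) * (k + β)))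
    (hl : (l - α) * (l - β) = exp (-2 * l * ε) * ((l + α) * (l + β))) : False := by
  have hk0 : 0 < k := hα.trans hαk
  have hl0 : 0 < l := hk0.trans hkl
  have he : exp (-2 * l * ε) < exp (-2 * k * ε) := exp_lt_exp.2 (by nlinarith)
  have h1 : (k - α) / (k + α) < (l - α) / (l + α) := by
    rw [div_lt_div_iff₀ (by positivity) (by positivity)]; nlinarith
  have h2 : (k - β) / (k + β) < (l - β) / (l + β) := by
    rw [div_lt_div_iff₀ (by positivity) (by positivity)]; nlinarith
  have h3 := mul_lt_mul'' h1 h2 (div_nonneg (by linarith) (by positivity))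
    (div_nonneg (by linarith) (by positivity))
  rw [div_mul_div_comm, div_mul_div_comm, hk, hl, mul_div_cancel_right₀ _ (by positivity),
    mul_div_cancel_right₀ _ (by positivity)] at h3
  linarith

lemma small_root_unique (hα : 0 < α) (hβ : 0 < β) {l : ℝ} (hk0 : 0 < k)
    (hkl : k < l) (hlα : l < α) (hlβ : l < β)
    (hk : (k - α) * (k - β) = exp (-2 * k * ε) * ((k + α) * (k + β)))
    (hl : (l - α) * (l - β) = exp (-2 * l * ε) * ((l + α) * (l + β))) : False := by
  set L : ℝ → ℝ := fun x =>
    log (α - x) + log (β - x) + 2 * x * ε - (log (α + x) + log (β + x)) with hL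
  have hder (x : ℝ) (hx : x ∈ Set.Icc 0 l) : HasDerivAt L
      (2 * (ε - α / (α ^ 2 - x ^ 2) - β / (β ^ 2 - x ^ 2))) x := by
    have a1 : α - x ≠ 0 := by linarith [hx.2]
    have a2 : β - x ≠ 0 := by linarith [hx.2]
    have a3 : α + x ≠ 0 := by linarith [hx.1]
    have a4 : β + x ≠ 0 := by linarith [hx.1]
    have hi := hasDerivAt_id x
    refine (((((hi.const_sub α).log a1).add ((hi.const_sub β).log a2)).add
      ((hi.const_mul 2).mul_const ε)).sub
      (((hi.const_add α).log a3).add ((hi.const_add β).log a4))).congr_deriv ?_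
    have b1 : α ^ 2 - x ^ 2 = (α - x) * (α + x) := by ring
    have b2 : β ^ 2 - x ^ 2 = (β - x) * (β + x) := by ring
    rw [b1, b2]
    simp only [id_eq]
    field_simp
    ring
  have hroot (x : ℝ) (hx0 : 0 < x) (hxl : x ≤ l)
      (h : (x - α) * (x - β) = exp (-2 * x * ε) * ((x + α) * (x + β))) : L x = 0 := by
    have a1 : 0 < α - x := by linarith
    have a2 : 0 < β - x := by linarith
    have h' : (α - x) * (β - x) = exp (-2 * x * ε) * ((α + x) * (β + x)) := by
      linear_combination h
    have := congrArg log h'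
    rw [log_mul a1.ne' a2.ne', log_mul (exp_pos _).ne' (by positivity), log_exp,
      log_mul (by positivity) (by positivity)] at this
    simp only [hL]
    linarith
  have hcont : ContinuousOn L (Set.Icc 0 l) :=
    fun x hx => (hder x hx).continuousAt.continuousWithinAt
  obtain ⟨c, hc, hc0⟩ := exists_hasDerivAt_eq_zero hk0
    (hcont.mono (Set.Icc_subset_Icc le_rfl hkl.le))
    (by rw [hroot k hk0 hkl.le hk]; simp [hL])
    (fun x hx => hder x ⟨hx.1.le, hx.2.le.trans hkl.le⟩)
  obtain ⟨d, hd, hd0⟩ := exists_hasDerivAt_eq_zero hkl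
    (hcont.mono (Set.Icc_subset_Icc hk0.le le_rfl))
    (by rw [hroot k hk0 hkl.le hk, hroot l (hk0.trans hkl) le_rfl hl])
    (fun x hx => hder x ⟨hk0.le.trans hx.1.le, hx.2.le⟩)
  have hcd : c < d := hc.2.trans hd.1
  have hsq : c ^ 2 < d ^ 2 := by nlinarith [hc.1]
  have hdα : 0 < α ^ 2 - d ^ 2 := by nlinarith [hd.1, hd.2]
  have hdβ : 0 < β ^ 2 - d ^ 2 := by nlinarith [hd.1, hd.2]
  have h1 : α / (α ^ 2 - c ^ 2) < α / (α ^ 2 - d ^ 2) :=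
    div_lt_div_of_pos_left hα hdα (by linarith)
  have h2 : β / (β ^ 2 - c ^ 2) < β / (β ^ 2 - d ^ 2) :=
    div_lt_div_of_pos_left hβ hdβ (by linarith)
  linarith

lemma eq_neg_sqrt_sq (h : lam < 0) : lam = -√(-lam) ^ 2 := by
  rw [sq_sqrt (by linarith)]; ring

lemma subsingleton_eigen_lt (hε : 0 < ε) (hα : 0 < α) (hβ : 0 < β) {μ : ℝ}
    (hlm : lam < μ) (hμ : μ < -β ^ 2) (h1 : IsS'Eigen ε β (-α) lam)
    (h2 : IsS'Eigen ε β (-α) μ) : False := by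
  have hμ0 : μ < 0 := by nlinarith
  have hl0 : lam < 0 := hlm.trans hμ0
  have hkμ : 0 < √(-μ) := sqrt_pos.2 (by linarith)
  have hkl : √(-μ) < √(-lam) := sqrt_lt_sqrt (by linarith) (by linarith)
  rw [eq_neg_sqrt_sq hl0] at h1
  rw [eq_neg_sqrt_sq hμ0] at h2
  have s1 := secular_of_isS'Eigen_neg (hkμ.trans hkl) h1
  have s2 := secular_of_isS'Eigen_neg hkμ h2
  have hβμ : β < √(-μ) := lt_sqrt_of_sq_lt (by linarith)
  rcases lt_or_lt_of_secular hα hβ hkμ s2 with h | h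
  · linarith [h.2]
  · exact large_root_unique hε hα hβ h.1 h.2 hkl s2 s1

lemma subsingleton_eigen_Ico (hα : 0 < α) (hβ : 0 < β) {μ : ℝ}
    (hβl : -β ^ 2 ≤ lam) (hlm : lam < μ) (hμ0 : μ < 0) (h1 : IsS'Eigen ε β (-α) lam)
    (h2 : IsS'Eigen ε β (-α) μ) : False := by
  have hl0 : lam < 0 := hlm.trans hμ0
  have hkμ : 0 < √(-μ) := sqrt_pos.2 (by linarith)
  have hkl : √(-μ) < √(-lam) := sqrt_lt_sqrt (by linarith) (by linarith)
  rw [eq_neg_sqrt_sq hl0] at h1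
  rw [eq_neg_sqrt_sq hμ0] at h2
  have s1 := secular_of_isS'Eigen_neg (hkμ.trans hkl) h1
  have s2 := secular_of_isS'Eigen_neg hkμ h2
  have hβμ : √(-lam) ≤ β := sqrt_le_iff.2 ⟨hβ.le, by linarith⟩
  rcases lt_or_lt_of_secular hα hβ (hkμ.trans hkl) s1 with h | h
  · exact small_root_unique hα hβ hkμ hkl h.1 h.2 s2 s1
  · linarith [h.2]

/-- The total phase: `k ^ 2` is an eigenvalue exactly when it is a multiple of `π`. -/
noncomputable def phase (ε β α k : ℝ) : ℝ := arctan (α / k) + arctan (β / k) + k * ε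

lemma exists_phase_eq (hk : 0 < k)
    (h : (k ^ 2 - α * β) * sin (k * ε) + (α + β) * k * cos (k * ε) = 0) :
    ∃ n : ℤ, (n : ℝ) * π = phase ε β α k := by
  rw [← sin_eq_zero_iff, phase, sin_add, sin_add, cos_add]
  simp only [sin_arctan, cos_arctan]
  have h1 : √(1 + (α / k) ^ 2) ≠ 0 := by positivity
  have h2 : √(1 + (β / k) ^ 2) ≠ 0 := by positivity
  field_simp
  linear_combination h

lemma hasDerivAt_phase (hk : 0 < k) :
    HasDerivAt (phase ε β α) (ε - α / (k ^ 2 + α ^ 2) - β / (k ^ 2 + β ^ 2)) k := by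
  have hi := hasDerivAt_inv hk.ne'
  have h := (((hi.const_mul α).arctan.add (hi.const_mul β).arctan).add
    ((hasDerivAt_id k).mul_const ε))
  have h' : phase ε β α = fun x => arctan (α * x⁻¹) + arctan (β * x⁻¹) + id x * ε := by
    funext x; simp [phase, div_eq_mul_inv]
  rw [h']
  refine h.congr_deriv ?_
  field_simp
  ring

lemma exists_critical_phase {l : ℝ} (hα : 0 < α) (hk : 0 < k) (hkl : k < l)
    (h : phase ε β α k = phase ε β α l) :
    ∃ c ∈ Set.Ioo k l, ε * (c ^ 2 + α ^ 2) * (c ^ 2 + β ^ 2)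
      - α * (c ^ 2 + β ^ 2) - β * (c ^ 2 + α ^ 2) = 0 := by
  obtain ⟨c, hc, hc0⟩ := exists_hasDerivAt_eq_zero hkl
    (fun x hx => (hasDerivAt_phase (hk.trans_le hx.1)).continuousAt.continuousWithinAt) h
    (fun x hx => hasDerivAt_phase (hk.trans hx.1))
  refine ⟨c, hc, ?_⟩
  have hc1 : 0 < c := hk.trans hc.1
  have h1 : c ^ 2 + α ^ 2 ≠ 0 := by positivity
  have h2 : c ^ 2 + β ^ 2 ≠ 0 := by positivity
  field_simp at hc0
  linear_combination hc0

/-- The phase takes each value at most three times. -/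
lemma phase_not_four (hε : 0 < ε) (hα : 0 < α) {k₁ k₂ k₃ k₄ : ℝ} (hk : 0 < k₁)
    (h₁₂ : k₁ < k₂) (h₂₃ : k₂ < k₃) (h₃₄ : k₃ < k₄)
    (e₁₂ : phase ε β α k₁ = phase ε β α k₂) (e₂₃ : phase ε β α k₂ = phase ε β α k₃)
    (e₃₄ : phase ε β α k₃ = phase ε β α k₄) : False := by
  obtain ⟨a, ha, pa⟩ := exists_critical_phase hα hk h₁₂ e₁₂
  obtain ⟨b, hb, pb⟩ := exists_critical_phase hα (hk.trans h₁₂) h₂₃ e₂₃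
  obtain ⟨c, hc, pc⟩ := exists_critical_phase hα ((hk.trans h₁₂).trans h₂₃) h₃₄ e₃₄
  have hab : a < b := ha.2.trans hb.1
  have hbc : b < c := hb.2.trans hc.1
  have ha0 : 0 < a := hk.trans ha.1
  have sab : a ^ 2 < b ^ 2 := by nlinarith
  have sbc : b ^ 2 < c ^ 2 := by nlinarith
  have q1 : ε * (a ^ 2 + b ^ 2 + α ^ 2 + β ^ 2) - α - β = 0 := by
    apply mul_left_cancel₀ (sub_ne_zero.2 sab.ne)
    linear_combination pa - pb
  have q2 : ε * (b ^ 2 + c ^ 2 + α ^ 2 + β ^ 2) - α - β = 0 := by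
    apply mul_left_cancel₀ (sub_ne_zero.2 sbc.ne)
    linear_combination pb - pc
  nlinarith

/-- Between `(nπ/ε)²` and `((n+1)π/ε)²` there is an eigenvalue. -/
lemma exists_eigen_between (hε : 0 < ε) (hα : 0 < α) (hβ : 0 < β) {n : ℕ} (hn : 1 ≤ n) :
    ∃ lam, IsS'Eigen ε β (-α) lam ∧ (n * π / ε) ^ 2 < lam ∧
      lam < ((n + 1) * π / ε) ^ 2 := by
  set G : ℝ → ℝ := fun k => (-1) ^ n *
    ((k ^ 2 - α * β) * sin (k * ε) + (α + β) * k * cos (k * ε)) with hG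
  have hn0 : (0 : ℝ) < n := by exact_mod_cast hn
  have ha : 0 < n * π / ε := by positivity
  have hsq : ((-1 : ℝ) ^ n) * (-1) ^ n = 1 := by rw [← mul_pow]; simp
  have hGa : 0 < G (n * π / ε) := by
    simp only [hG, div_mul_cancel₀ _ hε.ne', sin_nat_mul_pi, cos_nat_mul_pi]
    have : (-1 : ℝ) ^ n * ((((n : ℝ) * π / ε) ^ 2 - α * β) * 0
        + (α + β) * (n * π / ε) * (-1) ^ n) = (α + β) * (n * π / ε) := by
      linear_combination (α + β) * (n * π / ε) * hsq
    rw [this]; positivity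
  have hGb : G ((n + 1) * π / ε) < 0 := by
    have s := sin_nat_mul_pi (n + 1)
    have c := cos_nat_mul_pi (n + 1)
    push_cast at s c
    simp only [hG, div_mul_cancel₀ _ hε.ne', s, c, pow_succ (-1 : ℝ) n]
    have : (-1 : ℝ) ^ n * ((((n + 1 : ℝ) * π / ε) ^ 2 - α * β) * 0
        + (α + β) * ((n + 1) * π / ε) * ((-1) ^ n * -1)) = -((α + β) * ((n + 1) * π / ε)) := by
      linear_combination -(α + β) * ((n + 1) * π / ε) * hsq
    rw [this]
    have : 0 < (α + β) * ((n + 1) * π / ε) := by positivity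
    linarith
  have hab : n * π / ε ≤ (n + 1) * π / ε := by gcongr; linarith
  have hcont : ContinuousOn G (Set.Icc (n * π / ε) ((n + 1) * π / ε)) := by
    simp only [hG]; fun_prop
  obtain ⟨k, hk, hk0⟩ := intermediate_value_Ioo' hab hcont ⟨hGb, hGa⟩
  have hkpos : 0 < k := ha.trans hk.1
  refine ⟨k ^ 2, isS'Eigen_pos_of_secular hε hkpos ?_, ?_, ?_⟩
  · simpa [hG] using hk0
  · exact pow_lt_pow_left₀ hk.1 ha.le two_ne_zero
  · exact pow_lt_pow_left₀ hk.2 hkpos.le two_ne_zero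

/-- A strictly increasing sequence of positive wave numbers of eigenvalues grows linearly. -/
lemma card_le_of_eigen_seq (hε : 0 < ε) (hα : 0 < α) (hβ : 0 < β) {κ : ℕ → ℝ} {a j : ℕ}
    (hj : a ≤ j) (hpos : ∀ i, a ≤ i → 0 < κ i) (hmono : ∀ i l, a ≤ i → i < l → κ i < κ l)
    (heig : ∀ i, a ≤ i → IsS'Eigen ε β (-α) (κ i ^ 2)) :
    ((j + 1 - a : ℕ) : ℝ) ≤ 3 * (κ j * ε / π + 1) := by
  have hex (i : ℕ) : ∃ n : ℤ, a ≤ i → (n : ℝ) * π = phase ε β α (κ i) := by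
    by_cases hi : a ≤ i
    · obtain ⟨n, hn⟩ := exists_phase_eq (hpos i hi)
        (secular_of_isS'Eigen_pos (hpos i hi) (heig i hi))
      exact ⟨n, fun _ => hn⟩
    · exact ⟨0, fun h => absurd h hi⟩
  choose n hn using hex
  set T : ℕ := ⌈κ j * ε / π⌉₊ with hT
  have hmaps : ∀ i ∈ Finset.Icc a j, n i ∈ Finset.Icc (1 : ℤ) T := by
    intro i hi
    obtain ⟨hai, hij⟩ := Finset.mem_Icc.1 hi
    have hki := hpos i hai
    have hle : κ i ≤ κ j := by
      rcases hij.eq_or_lt with rfl | h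
      · exact le_rfl
      · exact (hmono i j hai h).le
    have e := hn i hai
    rw [phase] at e
    have p1 : 0 < arctan (α / κ i) := arctan_pos.2 (by positivity)
    have p2 : 0 < arctan (β / κ i) := arctan_pos.2 (by positivity)
    have p3 : 0 < κ i * ε := by positivity
    have hn0 : (0 : ℝ) < n i := pos_of_mul_pos_left (by rw [e]; positivity) pi_pos.le
    have hn1 : (n i : ℝ) - 1 < T := by
      have : (n i : ℝ) - 1 < κ j * ε / π := by
        rw [lt_div_iff₀ pi_pos]
        have : κ i * ε ≤ κ j * ε := by gcongr
        linarith [arctan_lt_pi_div_two (α / κ i), arctan_lt_pi_div_two (β / κ i)]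
      exact this.trans_le (Nat.le_ceil _)
    rw [Finset.mem_Icc]
    have hn0' : 0 < n i := by exact_mod_cast hn0
    have hn1' : n i - 1 < T := by exact_mod_cast hn1
    omega
  have hfib : ∀ b ∈ Finset.Icc (1 : ℤ) T, ((Finset.Icc a j).filter (n · = b)).card ≤ 3 := by
    intro b _
    by_contra! hcard
    obtain ⟨s, hs, hs4⟩ := Finset.exists_subset_card_eq (Nat.succ_le_of_lt hcard)
    let g := s.orderEmbOfFin hs4
    have hmem (i : Fin 4) : a ≤ g i ∧ n (g i) = b := by
      have := hs (s.orderEmbOfFin_mem hs4 i)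
      rw [Finset.mem_filter, Finset.mem_Icc] at this
      exact ⟨this.1.1, this.2⟩
    have hlt (i l : Fin 4) (h : i < l) : κ (g i) < κ (g l) :=
      hmono _ _ (hmem i).1 (g.strictMono h)
    have heq (i l : Fin 4) : phase ε β α (κ (g i)) = phase ε β α (κ (g l)) := by
      rw [← hn _ (hmem i).1, ← hn _ (hmem l).1, (hmem i).2, (hmem l).2]
    exact phase_not_four hε hα (hpos _ (hmem 0).1) (hlt 0 1 (by decide)) (hlt 1 2 (by decide))
      (hlt 2 3 (by decide)) (heq 0 1) (heq 1 2) (heq 2 3)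
  have hcard := Finset.card_le_mul_card_image_of_maps_to hmaps 3 hfib
  rw [Nat.card_Icc, Int.card_Icc] at hcard
  have hT1 : (T : ℝ) < κ j * ε / π + 1 :=
    Nat.ceil_lt_add_one (by have := hpos j hj; positivity)
  have hc : ((j + 1 - a : ℕ) : ℝ) ≤ 3 * T := by
    have : j + 1 - a ≤ 3 * T := by omega
    exact_mod_cast this
  linarith

/-- For large `α` the least eigenvalue is `-k ^ 2` with `α < k` close to `α`. -/
lemma exists_isLeast (hε : 0 < ε) (hβ : 0 < β) (hαβ : 3 * β ≤ α) (hαε : 1 / ε ≤ α) :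
    ∃ k, α < k ∧ (k - α) * (k - β) = exp (-2 * k * ε) * ((k + α) * (k + β)) ∧
      IsLeast {lam | IsS'Eigen ε β (-α) lam} (-k ^ 2) := by
  have hα : 0 < α := by linarith
  set F : ℝ → ℝ := fun k => (k - α) * (k - β) - exp (-2 * k * ε) * ((k + α) * (k + β)) with hF
  have hFa : F α < 0 := by
    have : 0 < exp (-2 * α * ε) * ((α + α) * (α + β)) := by positivity
    simp only [hF]; linarith
  have hFb : 0 < F (2 * α) := by
    have h1 : 1 ≤ α * ε := (div_le_iff₀ hε).1 hαε
    have h2 : exp (-2 * (2 * α) * ε) ≤ 1 / 5 := by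
      rw [show -2 * (2 * α) * ε = -(4 * (α * ε)) by ring, exp_neg, inv_eq_one_div]
      gcongr
      linarith [add_one_le_exp (4 * (α * ε))]
    have h3 : exp (-2 * (2 * α) * ε) * ((2 * α + α) * (2 * α + β)) ≤
        1 / 5 * ((2 * α + α) * (2 * α + β)) := by gcongr
    have h4 : 0 < (2 * α - α) * (2 * α - β) - 1 / 5 * ((2 * α + α) * (2 * α + β)) := by
      nlinarith
    simp only [hF]
    linarith
  have hcont : ContinuousOn F (Set.Icc α (2 * α)) := by simp only [hF]; fun_prop
  obtain ⟨k, hk, hk0⟩ := intermediate_value_Ioo (by linarith : α ≤ 2 * α) hcont ⟨hFa, hFb⟩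
  have hs := sub_eq_zero.1 hk0
  have heig := isS'Eigen_neg_of_secular hε (hα.trans hk.1) hs
  refine ⟨k, hk.1, hs, heig, fun lam hlam => ?_⟩
  by_contra! hlt
  exact subsingleton_eigen_lt hε hα hβ hlt (by nlinarith [hk.1]) hlam heig

lemma sq_mul_exp_neg_le (hε : 0 < ε) (hk : 0 < k) :
    k ^ 2 * exp (-2 * k * ε) ≤ 2 / ε ^ 2 * exp (-(k * ε)) := by
  have h1 : (k * ε) ^ 2 / 2 ≤ exp (k * ε) := by
    linarith [quadratic_le_exp_of_nonneg (mul_pos hk hε).le, mul_pos hk hε]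
  have e2 : exp (-2 * k * ε) = exp (-(k * ε)) * exp (-(k * ε)) := by
    rw [← exp_add]; ring_nf
  have e1 : exp (k * ε) * exp (-(k * ε)) = 1 := by rw [← exp_add]; simp
  have h2 : k ^ 2 ≤ 2 / ε ^ 2 * exp (k * ε) := by
    rw [div_mul_eq_mul_div, le_div_iff₀ (by positivity)]
    linarith
  calc k ^ 2 * exp (-2 * k * ε) ≤ 2 / ε ^ 2 * exp (k * ε) * exp (-2 * k * ε) := by gcongr
    _ = 2 / ε ^ 2 * exp (-(k * ε)) := by
      rw [e2]; linear_combination (2 / ε ^ 2 * exp (-(k * ε))) * e1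

lemma abs_sInf_eigen_add_sq_le (hε : 0 < ε) (hβ : 0 < β) (hαβ : 3 * β ≤ α)
    (hαε : 1 / ε ≤ α) :
    |sInf {lam | IsS'Eigen ε β (-α) lam} + α ^ 2| ≤ 24 / ε ^ 2 * exp (-ε * α) := by
  obtain ⟨k, hαk, hs, hleast⟩ := exists_isLeast hε hβ hαβ hαε
  have hα : 0 < α := by linarith
  have hk : 0 < k := hα.trans hαk
  rw [hleast.csInf_eq, abs_of_nonpos (by nlinarith)]
  have he := exp_pos (-2 * k * ε)
  have h1 : k - α ≤ 3 * exp (-2 * k * ε) * (k + α) := by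
    have h3 : k + β ≤ 3 * (k - β) := by linarith
    have hkβ : 0 < k - β := by linarith
    refine le_of_mul_le_mul_right ?_ hkβ
    rw [hs]
    have : exp (-2 * k * ε) * ((k + α) * (k + β)) ≤
        exp (-2 * k * ε) * ((k + α) * (3 * (k - β))) := by gcongr
    linarith
  have h2 : k ^ 2 - α ^ 2 ≤ 12 * (k ^ 2 * exp (-2 * k * ε)) := by
    calc k ^ 2 - α ^ 2 = (k - α) * (k + α) := by ring
      _ ≤ 3 * exp (-2 * k * ε) * (k + α) * (k + α) := by gcongr
      _ ≤ 3 * exp (-2 * k * ε) * (k + k) * (k + k) := by gcongr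
      _ = _ := by ring
  have h3 : exp (-(k * ε)) ≤ exp (-ε * α) := exp_le_exp.2 (by nlinarith)
  calc -(-k ^ 2 + α ^ 2) = k ^ 2 - α ^ 2 := by ring
    _ ≤ 12 * (2 / ε ^ 2 * exp (-(k * ε))) := h2.trans (by
      gcongr 12 * ?_; exact sq_mul_exp_neg_le hε hk)
    _ ≤ 12 * (2 / ε ^ 2 * exp (-ε * α)) := by gcongr
    _ = _ := by ring

lemma eigen_upper_bound (hε : 0 < ε) (hα : 0 < α) (hβ : 0 < β) {E : ℕ → ℝ}
    (hmono : ∀ i j : ℕ, 1 ≤ i → i < j → E i < E j)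
    (hsurj : ∀ lam, IsS'Eigen ε β (-α) lam → ∃ j : ℕ, 1 ≤ j ∧ E j = lam)
    {j : ℕ} (hj : 1 ≤ j) : E j ≤ (2 * π / ε) ^ 2 * (j : ℝ) ^ 2 := by
  have hex (n : ℕ) : ∃ i : ℕ, 1 ≤ i ∧ ((n + 1 : ℕ) * π / ε) ^ 2 < E i ∧
      E i < (((n + 1 : ℕ) + 1) * π / ε) ^ 2 := by
    obtain ⟨lam, h, hl⟩ := exists_eigen_between hε hα hβ (Nat.succ_pos n)
    obtain ⟨i, hi, rfl⟩ := hsurj lam h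
    exact ⟨i, hi, hl⟩
  choose g hg1 hgl hgu using hex
  have hmono_le {i l : ℕ} (hi : 1 ≤ i) (h : i ≤ l) : E i ≤ E l := by
    rcases h.eq_or_lt with rfl | h
    · exact le_rfl
    · exact (hmono i l hi h).le
  have hg : StrictMono g := by
    refine strictMono_nat_of_lt_succ fun n => ?_
    by_contra! hle
    have h1 := hmono_le (hg1 _) hle
    have h2 := hgu n
    have h3 := hgl (n + 1)
    push_cast at h1 h2 h3
    linarith
  have hge (n : ℕ) : n + 1 ≤ g n := by
    induction n with
    | zero => exact hg1 0
    | succ n ih => exact Nat.succ_le_of_lt (ih.trans_lt (hg n.lt_succ_self))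
  obtain ⟨n, rfl⟩ : ∃ n, j = n + 1 := ⟨j - 1, by omega⟩
  refine ((hmono_le hj (hge n)).trans (hgu n).le).trans ?_
  rw [← mul_pow]
  have : ((n + 1 : ℕ) + 1 : ℝ) ≤ 2 * (n + 1 : ℕ) := by push_cast; linarith [n.cast_nonneg (α := ℝ)]
  calc (((n + 1 : ℕ) + 1) * π / ε) ^ 2 ≤ (2 * (n + 1 : ℕ) * π / ε) ^ 2 := by gcongr
    _ = _ := by ring

lemma eigen_lower_bound (hε : 0 < ε) (hα : 0 < α) (hβ : 0 < β) {E : ℕ → ℝ}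
    (hmono : ∀ i j : ℕ, 1 ≤ i → i < j → E i < E j)
    (heig : ∀ j : ℕ, 1 ≤ j → IsS'Eigen ε β (-α) (E j)) {j : ℕ} (hj : 2 ≤ j) :
    (π / ε) ^ 2 / 18 * (j : ℝ) ^ 2 - (4 * (π / ε) ^ 2 + β ^ 2) ≤ E j := by
  have h2 : -β ^ 2 ≤ E 2 := by
    by_contra! h
    exact subsingleton_eigen_lt hε hα hβ (hmono 1 2 le_rfl (by norm_num)) h
      (heig 1 le_rfl) (heig 2 (by norm_num))
  have h4 : 0 < E 4 := by
    by_contra! h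
    have h34 := hmono 3 4 (by norm_num) (by norm_num)
    exact subsingleton_eigen_Ico hα hβ h2 (hmono 2 3 (by norm_num) (by norm_num))
      (by linarith) (heig 2 (by norm_num)) (heig 3 (by norm_num))
  rcases lt_or_ge j 4 with hj4 | hj4
  · have hEj : -β ^ 2 ≤ E j := by
      rcases hj.eq_or_lt with rfl | h
      · exact h2
      · exact h2.trans (hmono 2 j (by norm_num) h).le
    have hj3 : (j : ℝ) ≤ 3 := by exact_mod_cast Nat.lt_succ_iff.1 hj4
    have hjs : (j : ℝ) ^ 2 ≤ 3 ^ 2 := by gcongr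
    have hp : 0 < (π / ε) ^ 2 := by positivity
    nlinarith
  · have hpos (i : ℕ) (hi : 4 ≤ i) : 0 < E i := by
      rcases hi.eq_or_lt with rfl | h
      · exact h4
      · exact h4.trans (hmono 4 i (by norm_num) h)
    have hcard := card_le_of_eigen_seq hε hα hβ (κ := fun i => √(E i)) hj4
      (fun i hi => sqrt_pos.2 (hpos i hi))
      (fun i l hi hl => sqrt_lt_sqrt (hpos i hi).le (hmono i l (by omega) hl))
      (fun i hi => by rw [sq_sqrt (hpos i hi).le]; exact heig i (by omega))
    have hsub : ((j + 1 - 4 : ℕ) : ℝ) = j - 3 := by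
      rw [Nat.cast_sub (by omega)]; push_cast; ring
    rw [hsub] at hcard
    set x := √(E j) * ε / π with hx
    have hx0 : 0 ≤ x := by positivity
    have hEx : E j = (π / ε) ^ 2 * x ^ 2 := by
      rw [hx, div_pow _ π, mul_pow, sq_sqrt (hpos j hj4).le]
      have := pi_pos.ne'
      field_simp
    have hjx : (j : ℝ) ≤ 3 * (x + 2) := by linarith
    have hjs : (j : ℝ) ^ 2 ≤ (3 * (x + 2)) ^ 2 := by gcongr
    have hxs : (j : ℝ) ^ 2 / 18 - 4 ≤ x ^ 2 := by nlinarith [sq_nonneg (x - 2)]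
    have := mul_le_mul_of_nonneg_left hxs (sq_nonneg (π / ε))
    rw [hEx]
    nlinarith [sq_nonneg β]

end RobinInterval

/-- With `m < 0`, `α := −m`: as `α → +∞` one has `E₁(S') = −α² + O(e^{−εα})`, and there
are constants `b⁻, b⁺, b > 0` independent of `α` with `b⁻ j² − b ≤ E_j(S') ≤ b⁺ j²` for
all `j ≥ 2` and all `α > 0` (here `E` is the enumeration of the eigenvalues of `S'` in
increasing order, `E j` being the `j`-th eigenvalue for `j ≥ 1`). -/
theorem stmt_7 (ε β : ℝ) (hε : 0 < ε) (hβ : 0 < β) :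
    (∃ α₀ K : ℝ, 0 < α₀ ∧ 0 < K ∧ ∀ m : ℝ, m < 0 → α₀ ≤ -m →
      |sInf {lam | IsS'Eigen ε β m lam} + m ^ 2| ≤ K * Real.exp (-ε * (-m))) ∧
    (∃ bm bp b : ℝ, 0 < bm ∧ 0 < bp ∧ 0 < b ∧
      ∀ m : ℝ, m < 0 → ∀ E : ℕ → ℝ,
        (∀ i j : ℕ, 1 ≤ i → i < j → E i < E j) →
        (∀ j : ℕ, 1 ≤ j → IsS'Eigen ε β m (E j)) →
        (∀ lam, IsS'Eigen ε β m lam → ∃ j : ℕ, 1 ≤ j ∧ E j = lam) →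
        ∀ j : ℕ, 2 ≤ j → bm * (j : ℝ) ^ 2 - b ≤ E j ∧ E j ≤ bp * (j : ℝ) ^ 2) := by
  have hπ := Real.pi_pos
  refine ⟨⟨max (3 * β) (1 / ε), 24 / ε ^ 2, by positivity, by positivity, fun m _ hm => ?_⟩,
    (Real.pi / ε) ^ 2 / 18, (2 * Real.pi / ε) ^ 2, 4 * (Real.pi / ε) ^ 2 + β ^ 2,
    by positivity, by positivity, by positivity, fun m hm E hmono heig hsurj j hj => ?_⟩
  · have := RobinInterval.abs_sInf_eigen_add_sq_le hε hβ ((le_max_left _ _).trans hm)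
      ((le_max_right _ _).trans hm)
    simpa using this
  · have hα : 0 < -m := by linarith
    rw [← neg_neg m] at heig hsurj
    exact ⟨RobinInterval.eigen_lower_bound hε hα hβ hmono heig hj,
      RobinInterval.eigen_upper_bound hε hα hβ hmono hsurj (by omega)⟩
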